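/- Let v ∈ (0, 1/2] and let w = (w¹, w²) ∈ ℝ² satisfy |w²| ≤ √(v/(1−v))·|w¹| − 2. Let X ~ N(w¹,1) and Y ~ N(w²,1) be independent and define g_w(v) = P(|Y| ≤ √(v/(1−v))·|X|). Then g_w(v) ≥ 1 − e^{−1} > 1/2. -/

import Mathlib

open MeasureTheory ProbabilityTheory Real

noncomputable section

/-- `g_w(v)`: the probability that a 2-dimensional Gaussian with mean `w = (w¹,w²)` and identity
covariance lies in the double cone `A_v = {(x,y) : |y| ≤ √(v/(1-v))·|x|}`. -/
def gCone (w1 w2 v : ℝ) : ℝ :=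
  (((gaussianReal w1 1).prod (gaussianReal w2 1))
      {p : ℝ × ℝ | |p.2| ≤ √(v / (1 - v)) * |p.1|}).toReal

lemma geom (c w1 w2 x y : ℝ) (hc0 : 0 ≤ c) (hc1 : c ≤ 1) (hw : |w2| ≤ c * |w1| - 2)
    (h : (x-w1)^2 + (y-w2)^2 ≤ 2) : |y| ≤ c * |x| := by
  have h1 : |y| ≤ |w2| + |y - w2| := by
    have := abs_add_le w2 (y - w2); simpa using this
  have h2 : |w1| ≤ |x| + |x - w1| := by
    have := abs_sub_abs_le_abs_sub w1 x
    rw [abs_sub_comm] at this; linarith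
  have h3 : |x - w1| + |y - w2| ≤ 2 := by
    rw [← sq_abs (x-w1), ← sq_abs (y-w2)] at h
    nlinarith [sq_nonneg (|x-w1| - |y-w2|), abs_nonneg (x-w1), abs_nonneg (y-w2)]
  have h4 : c * |w1| ≤ c * |x| + c * |x - w1| := by rw [← mul_add]; gcongr
  have h5 : c * |x - w1| ≤ 1 * |x - w1| := by gcongr
  linarith

lemma radial : ∫ r in (0:ℝ)..√2, r * exp (-r^2/2) = 1 - exp (-1) := by
  have : ∀ r ∈ Set.uIcc (0:ℝ) √2, HasDerivAt (fun r : ℝ => -exp (-r^2/2)) (r * exp (-r^2/2)) r := by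
    intro r _
    have := (((hasDerivAt_pow 2 r).neg.div_const 2).exp).neg
    refine HasDerivAt.congr_deriv this ?_
    simp only [Pi.neg_apply, Pi.pow_apply, id_eq]; push_cast; ring
  rw [intervalIntegral.integral_eq_sub_of_hasDerivAt this (by apply Continuous.intervalIntegrable; fun_prop)]
  norm_num
  ring

/-- the radial density -/
def FF (s : ℝ) : ENNReal :=
  if s ≤ 2 then ENNReal.ofReal (exp (-s/2) / (2*π)) else 0

lemma FF_meas : Measurable FF := by
  unfold FF
  exact Measurable.ite measurableSet_Iic (by fun_prop) measurable_const

lemma polar_int : ∫⁻ p : ℝ × ℝ, FF (p.1^2 + p.2^2) = ENNReal.ofReal (1 - exp (-1)) := by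
  rw [← lintegral_comp_polarCoord_symm]
  have e : ∀ p : ℝ × ℝ, (polarCoord.symm p).1^2 + (polarCoord.symm p).2^2 = p.1^2 := by
    intro p
    simp only [polarCoord_symm_apply, mul_pow, ← mul_add, cos_sq_add_sin_sq, mul_one]
  simp only [e, polarCoord_target, smul_eq_mul]
  have := FF_meas
  rw [Measure.volume_eq_prod, ← Measure.prod_restrict, lintegral_prod _ (by fun_prop)]
  simp only [lintegral_const, Measure.restrict_apply_univ, Real.volume_Ioo]
  rw [lintegral_mul_const _ (by fun_prop)]
  have h1 : ∫⁻ r in Set.Ioi (0:ℝ), ENNReal.ofReal r * FF (r^2)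
      = ∫⁻ r in Set.Ioc (0:ℝ) √2, ENNReal.ofReal (r * exp (-r^2/2) / (2*π)) := by
    rw [← lintegral_indicator measurableSet_Ioi, ← lintegral_indicator measurableSet_Ioc]
    congr 1; ext r
    by_cases hr : 0 < r
    · have : r ≤ √2 ↔ r^2 ≤ 2 := Real.le_sqrt' hr
      by_cases h : r^2 ≤ 2
      · simp [Set.indicator, hr, this, h, FF, mul_div_assoc, ENNReal.ofReal_mul hr.le]
      · simp [Set.indicator, hr, this, h, FF]
    · simp [Set.indicator, hr]
  rw [h1, ← ofReal_integral_eq_lintegral_ofReal, ← intervalIntegral.integral_of_le (by positivity),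
    intervalIntegral.integral_div, radial, ← ENNReal.ofReal_mul]
  · congr 1; field_simp; ring
  · have : exp (-1) ≤ 1 := by simp
    have : 0 ≤ 1 - exp (-1) := by linarith
    positivity
  · apply IntegrableOn.integrable
    apply Continuous.integrableOn_Ioc; fun_prop
  · filter_upwards [ae_restrict_mem measurableSet_Ioc] with r hr
    have := hr.1
    simp only [Pi.zero_apply]; positivity

lemma ball_meas (w1 w2 : ℝ) : ((gaussianReal w1 1).prod (gaussianReal w2 1))
      {p : ℝ × ℝ | (p.1-w1)^2 + (p.2-w2)^2 ≤ 2} = ENNReal.ofReal (1 - exp (-1)) := by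
  have hB : MeasurableSet {p : ℝ × ℝ | (p.1-w1)^2 + (p.2-w2)^2 ≤ 2} :=
    measurableSet_le (by fun_prop) (by fun_prop)
  rw [gaussianReal_of_var_ne_zero _ one_ne_zero, gaussianReal_of_var_ne_zero _ one_ne_zero,
    prod_withDensity (measurable_gaussianPDF _ _) (measurable_gaussianPDF _ _),
    withDensity_apply _ hB, ← lintegral_indicator hB, ← polar_int, ← Measure.volume_eq_prod,
    ← lintegral_add_right_eq_self _ ((w1, w2) : ℝ × ℝ)]
  congr 1; ext p
  by_cases h : p.1^2+p.2^2 ≤ 2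
  · simp only [Set.indicator, Set.mem_ofPred_eq, Prod.fst_add, Prod.snd_add, add_sub_cancel_right, h, if_true, FF, gaussianPDF, gaussianPDFReal]
    rw [← ENNReal.ofReal_mul (by positivity)]
    congr 1
    have : (√(2*π))⁻¹ * (√(2*π))⁻¹ = (2*π)⁻¹ := by
      rw [← mul_inv, Real.mul_self_sqrt (by positivity)]
    simp only [NNReal.coe_one, mul_one]
    rw [mul_mul_mul_comm, this, ← exp_add, div_eq_inv_mul (exp _) (2*π)]
    congr 2; ring
  · simp [Set.indicator, h, FF]

/-- if `v ∈ (0,1/2]` and `|w²| ≤ √(v/(1-v))·|w¹| - 2`, then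
`g_w(v) ≥ 1 - e^{-1} > 1/2`. -/
theorem gCone_gt_half_of_deep_in_cone (v : ℝ) (hv0 : 0 < v) (hv : v ≤ 1 / 2) (w1 w2 : ℝ)
    (hw : |w2| ≤ √(v / (1 - v)) * |w1| - 2) :
    1 - exp (-1) ≤ gCone w1 w2 v ∧ (1 : ℝ) / 2 < 1 - exp (-1) := by
  constructor
  · have hc1 : √(v / (1 - v)) ≤ 1 := by
      rw [Real.sqrt_le_left (by norm_num), one_pow, div_le_one (by linarith)]; linarith
    have hp : 0 ≤ 1 - exp (-1) := by
      have : exp (-1) ≤ 1 := by simp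
      linarith
    rw [← ENNReal.toReal_ofReal hp, ← ball_meas w1 w2]
    unfold gCone
    apply ENNReal.toReal_mono (measure_ne_top _ _)
    apply measure_mono
    intro p h
    exact geom _ w1 w2 p.1 p.2 (sqrt_nonneg _) hc1 hw h
  · have := Real.exp_neg_one_lt_d9
    linarith

end
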